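/- arXiv:0812.1064 — 2 statements merged into one kernel-verified Lean document; each statement's English description precedes it below -/
import Mathlib

section
/- A finite simple graph G belongs to D̂_2 if and only if G is isomorphic to the complete graph K_4. -/
open SimpleGraph

/-- The degree of a vertex in a finite simple graph. -/
noncomputable def degC {V : Type} [Fintype V] (G : SimpleGraph V) (v : V) : ℕ := by
  classical exact G.degree v

/-- The minimum degree of a finite simple graph. -/
noncomputable def minDegC {V : Type} [Fintype V] (G : SimpleGraph V) : ℕ := by
  classical exact G.minDegree

/-- `H` is a minor of `G`: there is a family of nonempty, pairwise disjoint,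
connected branch sets, one for each vertex of `H`, such that every edge of `H`
is realised by an edge of `G` between the corresponding branch sets. -/
def IsMinorOf {W V : Type} (H : SimpleGraph W) (G : SimpleGraph V) : Prop :=
  ∃ B : W → Set V,
    (∀ w, (B w).Nonempty) ∧
    (∀ u w : W, u ≠ w → Disjoint (B u) (B w)) ∧
    (∀ w, (G.induce (B w)).Connected) ∧
    (∀ ⦃u w : W⦄, H.Adj u w → ∃ a ∈ B u, ∃ b ∈ B w, G.Adj a b)

/-- `H` is a proper minor of `G`: a minor that is not isomorphic to `G`. -/
def IsProperMinorOf {W V : Type} (H : SimpleGraph W) (G : SimpleGraph V) : Prop :=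
  IsMinorOf H G ∧ ¬ Nonempty (H ≃g G)

/-- `G ∈ D_k`: every minor of `G` has minimum degree at most `k`. -/
def MemD (k : ℕ) {V : Type} (G : SimpleGraph V) : Prop :=
  ∀ (W : Type) [Fintype W] (H : SimpleGraph W), IsMinorOf H G → minDegC H ≤ k

/-- `G ∈ D̂_k`: `G ∉ D_k` but every proper minor of `G` is in `D_k`. -/
def MemDHat (k : ℕ) {V : Type} (G : SimpleGraph V) : Prop :=
  ¬ MemD k G ∧ ∀ (W : Type) [Fintype W] (H : SimpleGraph W), IsProperMinorOf H G → MemD k H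

/-- The vertex `x` has at least three neighbours in `G`. -/
def HasThreeNeighbors {V : Type} (G : SimpleGraph V) (x : V) : Prop :=
  ∃ y₁ y₂ y₃ : V, y₁ ≠ y₂ ∧ y₁ ≠ y₃ ∧ y₂ ≠ y₃ ∧ G.Adj x y₁ ∧ G.Adj x y₂ ∧ G.Adj x y₃

lemma connected_induce_singleton {V : Type} (G : SimpleGraph V) (v : V) :
    (G.induce {v}).Connected := by
  have : Nonempty ({v} : Set V) := ⟨⟨v, rfl⟩⟩
  exact ⟨fun x y => Subsingleton.elim x y ▸ Reachable.refl _⟩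

lemma reachable_induce_mono {V : Type} (G : SimpleGraph V) {s t : Set V} (hst : s ⊆ t) {a b : V}
    (ha : a ∈ s) (hb : b ∈ s) (hab : (G.induce s).Reachable ⟨a, ha⟩ ⟨b, hb⟩) :
    (G.induce t).Reachable ⟨a, hst ha⟩ ⟨b, hst hb⟩ :=
  hab.map (induceHomOfLE G hst).toHom

lemma reachable_induce_iUnion {V W : Type} {G : SimpleGraph V} {H : SimpleGraph W} {B : W → Set V}
    (hconn : ∀ w, (G.induce (B w)).Connected)
    (hadj : ∀ ⦃u w : W⦄, H.Adj u w → ∃ a ∈ B u, ∃ b ∈ B w, G.Adj a b) {S : Set W} {T : Set V}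
    (hT : ∀ w ∈ S, B w ⊆ T) {u w : S} (p : (H.induce S).Walk u w) :
    ∀ a b, ∀ (ha : a ∈ B u) (hb : b ∈ B w),
      (G.induce T).Reachable ⟨a, hT u u.2 ha⟩ ⟨b, hT w w.2 hb⟩ := by
  induction p with
  | @nil u =>
    intro a b ha hb
    exact reachable_induce_mono G (hT u u.2) ha hb ((hconn u).preconnected ⟨a, ha⟩ ⟨b, hb⟩)
  | @cons u v w h p ih =>
    intro a b ha hb
    obtain ⟨c, hc, d, hd, hcd⟩ := hadj h
    have hac := reachable_induce_mono G (hT u u.2) ha hc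
      ((hconn u).preconnected ⟨a, ha⟩ ⟨c, hc⟩)
    have hadj' : (G.induce T).Adj ⟨c, hT u u.2 hc⟩ ⟨d, hT v v.2 hd⟩ := hcd
    exact (hac.trans hadj'.reachable).trans (ih d b hd hb)

lemma IsMinorOf.trans {U W V : Type} {K : SimpleGraph U} {H : SimpleGraph W} {G : SimpleGraph V}
    (hKH : IsMinorOf K H) (hHG : IsMinorOf H G) : IsMinorOf K G := by
  obtain ⟨B, hBne, hBdisj, hBconn, hBadj⟩ := hKH
  obtain ⟨C, hCne, hCdisj, hCconn, hCadj⟩ := hHG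
  have hne : ∀ u, (⋃ w ∈ B u, C w).Nonempty := fun u => by
    obtain ⟨w, hw⟩ := hBne u
    obtain ⟨v, hv⟩ := hCne w
    exact ⟨v, Set.mem_biUnion hw hv⟩
  refine ⟨fun u => ⋃ w ∈ B u, C w, hne, ?_, ?_, ?_⟩
  · intro u u' huu'
    simp only [Set.disjoint_iUnion_left, Set.disjoint_iUnion_right]
    intro w' hw' w hw
    refine hCdisj _ _ ?_
    rintro rfl
    exact Set.disjoint_left.1 (hBdisj u u' huu') hw hw'
  · intro u
    have : Nonempty (⋃ w ∈ B u, C w : Set V) := (hne u).to_subtype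
    refine ⟨?_⟩
    rintro ⟨a, ha⟩ ⟨b, hb⟩
    obtain ⟨w, hw, haw⟩ := Set.mem_iUnion₂.1 ha
    obtain ⟨w', hw', hbw'⟩ := Set.mem_iUnion₂.1 hb
    obtain ⟨p⟩ := (hBconn u).preconnected ⟨w, hw⟩ ⟨w', hw'⟩
    exact reachable_induce_iUnion hCconn hCadj
      (fun w hw => Set.subset_biUnion_of_mem (u := C) hw) p a b haw hbw'
  · intro u u' h
    obtain ⟨w, hw, w', hw', hww'⟩ := hBadj h
    obtain ⟨a, ha, b, hb, hab⟩ := hCadj hww'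
    exact ⟨a, Set.mem_biUnion hw ha, b, Set.mem_biUnion hw' hb, hab⟩

lemma IsMinorOf.of_embedding {W V : Type} {H : SimpleGraph W} {G : SimpleGraph V} (f : H ↪g G) :
    IsMinorOf H G := by
  refine ⟨fun w => {f w}, fun w => Set.singleton_nonempty _, ?_,
    fun w => connected_induce_singleton G _, ?_⟩
  · intro u w h
    simpa using h
  · intro u w h
    exact ⟨_, rfl, _, rfl, f.map_rel_iff.2 h⟩

lemma IsMinorOf.card_le {W V : Type} [Fintype W] [Fintype V] {H : SimpleGraph W}
    {G : SimpleGraph V} (h : IsMinorOf H G) : Fintype.card W ≤ Fintype.card V := by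
  obtain ⟨B, hne, hdisj, -⟩ := h
  choose f hf using hne
  refine Fintype.card_le_of_injective f fun u w huw => ?_
  by_contra hne
  exact Set.disjoint_left.1 (hdisj u w hne) (hf u) (huw ▸ hf w)

/-- A graph with a complete minor on at least as many vertices is itself complete. -/
lemma nonempty_iso_of_top_isMinorOf {W V : Type} [Fintype W] [Fintype V] {G : SimpleGraph V}
    (h : IsMinorOf (⊤ : SimpleGraph W) G) (hcard : Fintype.card V ≤ Fintype.card W) :
    Nonempty ((⊤ : SimpleGraph W) ≃g G) := by
  have hle := h.card_le
  obtain ⟨B, hne, hdisj, -, hadj⟩ := h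
  choose f hf using hne
  have key : ∀ u w, f u ∈ B w → u = w := fun u w huw => by
    by_contra hne
    exact Set.disjoint_left.1 (hdisj u w hne) (hf u) huw
  have hinj : Function.Injective f := fun u w huw => key u w (huw ▸ hf w)
  have hbij : Function.Bijective f :=
    (Fintype.bijective_iff_injective_and_card f).2 ⟨hinj, le_antisymm hle hcard⟩
  refine ⟨⟨Equiv.ofBijective f hbij, ?_⟩⟩
  intro u w
  simp only [Equiv.ofBijective_apply, top_adj]
  refine ⟨fun h huw => G.ne_of_adj h (huw ▸ rfl), fun huw => ?_⟩
  obtain ⟨a, ha, b, hb, hab⟩ := hadj (show (⊤ : SimpleGraph W).Adj u w from huw)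
  obtain ⟨u', rfl⟩ := hbij.2 a
  obtain ⟨w', rfl⟩ := hbij.2 b
  rwa [key _ _ ha, key _ _ hb] at hab

/-- `G` with the edge `ab` contracted, the new vertex being called `a`. -/
def contractInto {V : Type} (G : SimpleGraph V) (a b : V) : SimpleGraph {v : V // v ≠ b} where
  Adj x y := x ≠ y ∧ (G.Adj x y ∨ (x.1 = a ∧ G.Adj b y) ∨ (y.1 = a ∧ G.Adj x b))
  symm := ⟨fun x y h => ⟨h.1.symm, by
    rcases h.2 with h | ⟨h, h'⟩ | ⟨h, h'⟩
    · exact Or.inl h.symm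
    · exact Or.inr (Or.inr ⟨h, h'.symm⟩)
    · exact Or.inr (Or.inl ⟨h, h'.symm⟩)⟩⟩
  loopless := ⟨fun x h => h.1 rfl⟩

lemma contractInto_isMinorOf {V : Type} {G : SimpleGraph V} {a b : V} (hab : G.Adj a b) :
    IsMinorOf (contractInto G a b) G := by
  refine ⟨fun x => {y | y = x.1 ∨ (x.1 = a ∧ y = b)}, fun x => ⟨x, Or.inl rfl⟩, ?_, ?_, ?_⟩
  · rintro ⟨u, hu⟩ ⟨w, hw⟩ huw
    rw [Set.disjoint_left]
    grind
  · rintro ⟨x, hx⟩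
    change (G.induce {y | y = x ∨ (x = a ∧ y = b)}).Connected
    by_cases hxa : x = a
    · subst hxa
      have : {y | y = x ∨ (x = x ∧ y = b)} = ({x, b} : Set V) := by ext; simp
      rw [this]
      exact induce_pair_connected_of_adj hab
    · have : {y | y = x ∨ (x = a ∧ y = b)} = ({x} : Set V) := by ext; simp [hxa]
      rw [this]
      exact connected_induce_singleton G x
  · rintro ⟨u, hu⟩ ⟨w, hw⟩ ⟨-, h | ⟨h, h'⟩ | ⟨h, h'⟩⟩
    · exact ⟨u, Or.inl rfl, w, Or.inl rfl, h⟩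
    · exact ⟨b, Or.inr ⟨h, rfl⟩, w, Or.inl rfl, h'⟩
    · exact ⟨u, Or.inl rfl, b, Or.inr ⟨h, rfl⟩, h'⟩

/-- A vertex not adjacent to both ends of a contracted edge keeps three neighbours. -/
lemma HasThreeNeighbors.contractInto {V : Type} {G : SimpleGraph V} {a b x : V} (hab : a ≠ b)
    (hx : HasThreeNeighbors G x) (hxa : x ≠ a) (hxb : x ≠ b) (hcommon : ¬(G.Adj a x ∧ G.Adj b x)) :
    HasThreeNeighbors (contractInto G a b) ⟨x, hxb⟩ := by
  classical
  obtain ⟨y₁, y₂, y₃, h₁₂, h₁₃, h₂₃, h₁, h₂, h₃⟩ := hx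
  let f : V → {v : V // v ≠ b} := fun y => if h : y = b then ⟨a, hab⟩ else ⟨y, h⟩
  have hadj : ∀ y, G.Adj x y → (_root_.contractInto G a b).Adj ⟨x, hxb⟩ (f y) := by
    intro y hy
    have := hy.ne
    by_cases h : y = b
    · subst h
      simp [f, _root_.contractInto, hxa, hy]
    · simp [f, h, _root_.contractInto, hy, this]
  have hne : ∀ y z, G.Adj x y → G.Adj x z → y ≠ z → f y ≠ f z := by
    intro y z hy hz hyz
    have := hy.symm
    have := hz.symm
    simp only [f]
    grind
  exact ⟨f y₁, f y₂, f y₃, hne _ _ h₁ h₂ h₁₂, hne _ _ h₁ h₃ h₁₃, hne _ _ h₂ h₃ h₂₃,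
    hadj _ h₁, hadj _ h₂, hadj _ h₃⟩

lemma HasThreeNeighbors.induce {V : Type} {G : SimpleGraph V} {s : Set V} {x : V}
    (hx : HasThreeNeighbors G x) (hxs : x ∈ s) (hs : ∀ y, G.Adj x y → y ∈ s) :
    HasThreeNeighbors (G.induce s) ⟨x, hxs⟩ := by
  obtain ⟨y₁, y₂, y₃, h₁₂, h₁₃, h₂₃, h₁, h₂, h₃⟩ := hx
  exact ⟨⟨y₁, hs _ h₁⟩, ⟨y₂, hs _ h₂⟩, ⟨y₃, hs _ h₃⟩, by simpa using h₁₂, by simpa using h₁₃,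
    by simpa using h₂₃, h₁, h₂, h₃⟩

lemma HasThreeNeighbors.exists_adj_ne {V : Type} {G : SimpleGraph V} {x : V}
    (hx : HasThreeNeighbors G x) (a b : V) : ∃ y, G.Adj x y ∧ y ≠ a ∧ y ≠ b := by
  obtain ⟨y₁, y₂, y₃, h₁₂, h₁₃, h₂₃, h₁, h₂, h₃⟩ := hx
  by_contra! h
  have hy₁ := h y₁ h₁
  have hy₂ := h y₂ h₂
  have hy₃ := h y₃ h₃
  by_cases y₁ = a <;> by_cases y₂ = a <;> by_cases y₃ = a <;> simp_all

/-- The graph `G` with all edges at `a` and `b` removed. -/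
def isolatePair {V : Type} (G : SimpleGraph V) (a b : V) : SimpleGraph V where
  Adj x y := G.Adj x y ∧ (x ≠ a ∧ x ≠ b) ∧ (y ≠ a ∧ y ≠ b)
  symm := ⟨fun _ _ h => ⟨h.1.symm, h.2.2, h.2.1⟩⟩
  loopless := ⟨fun _ h => G.loopless.irrefl _ h.1⟩

lemma ne_of_mem_support_isolatePair {V : Type} {G : SimpleGraph V} {a b x y : V}
    (p : (isolatePair G a b).Walk x y) (hy : y ≠ a ∧ y ≠ b) :
    ∀ z ∈ p.support, z ≠ a ∧ z ≠ b := by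
  induction p with
  | nil => simpa using hy
  | cons h p ih =>
    intro z hz
    rw [Walk.support_cons, List.mem_cons] at hz
    rcases hz with rfl | hz
    · exact h.2.1
    · exact ih hy z hz

/-- Two common neighbours of adjacent vertices `a`, `b`, joined by a path avoiding `a` and `b`,
give a `K₄` minor. -/
lemma top_isMinorOf_of_common_neighbors {V : Type} {G : SimpleGraph V} {a b c d : V}
    (hab : G.Adj a b) (hac : G.Adj a c) (hbc : G.Adj b c) (had : G.Adj a d) (hbd : G.Adj b d)
    (hcd : c ≠ d) (hreach : (isolatePair G a b).Reachable c d) :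
    IsMinorOf (⊤ : SimpleGraph (Fin 4)) G := by
  classical
  obtain ⟨p, hp⟩ := hreach.exists_isPath
  cases p with
  | nil => exact absurd rfl hcd
  | @cons _ e _ h q =>
    rw [Walk.cons_isPath_iff] at hp
    have hsupp := ne_of_mem_support_isolatePair q ⟨had.ne', hbd.ne'⟩
    have hconn : (G.induce {v | v ∈ q.support}).Connected :=
      by
      have hle : isolatePair G a b ≤ G := fun _ _ h => h.1
      exact q.connected_induce_support.mono (comap_monotone _ hle)
    refine ⟨![{a}, {b}, {c}, {v | v ∈ q.support}], ?_, ?_, ?_, ?_⟩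
    · intro i
      fin_cases i <;> simp
    · have ha : a ∉ q.support := fun h => (hsupp a h).1 rfl
      have hb : b ∉ q.support := fun h => (hsupp b h).2 rfl
      intro i j hij
      fin_cases i <;> fin_cases j <;>
        simp_all [hab.ne, hab.ne', hac.ne, hac.ne', hbc.ne, hbc.ne']
    · intro i
      fin_cases i
      · exact connected_induce_singleton G a
      · exact connected_induce_singleton G b
      · exact connected_induce_singleton G c
      · exact hconn
    · have hce : ∃ x ∈ q.support, G.Adj c x := ⟨e, q.start_mem_support, h.1⟩
      have hax : ∃ x ∈ q.support, G.Adj a x := ⟨d, q.end_mem_support, had⟩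
      have hbx : ∃ x ∈ q.support, G.Adj b x := ⟨d, q.end_mem_support, hbd⟩
      intro i j hij
      fin_cases i <;> fin_cases j <;>
        simp_all [G.adj_comm]

/-- If `ab` is an edge and all the vertices other than `a` and `b`, of which there is at least
one, have degree at least three, then there is a `K₄` minor. -/
lemma top_isMinorOf_of_adj (n : ℕ) : ∀ (V : Type) [Fintype V] (G : SimpleGraph V) (a b x : V),
    Fintype.card V = n → G.Adj a b → x ≠ a → x ≠ b →
    (∀ v, v ≠ a → v ≠ b → HasThreeNeighbors G v) → IsMinorOf (⊤ : SimpleGraph (Fin 4)) G := by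
  classical
  induction n using Nat.strong_induction_on with
  | _ n ih =>
  intro V _ G a b x hn hab hxa hxb hdeg
  by_cases hreach : ∀ v, v ≠ a → v ≠ b → (isolatePair G a b).Reachable x v
  swap
  · push Not at hreach
    obtain ⟨v, hva, hvb, hv⟩ := hreach
    let s : Set V := {w | w = a ∨ w = b ∨ (isolatePair G a b).Reachable x w}
    have hcard : Fintype.card s < n :=
      hn ▸ Fintype.card_subtype_lt (p := fun w => w ∈ s) (x := v) (by simp [s, hva, hvb, hv])
    refine (ih _ hcard s (G.induce s) ⟨a, Or.inl rfl⟩ ⟨b, Or.inr (Or.inl rfl)⟩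
      ⟨x, Or.inr (Or.inr (Reachable.refl x))⟩ rfl hab (by simpa using hxa) (by simpa using hxb)
      ?_).trans (.of_embedding (Embedding.induce s))
    rintro ⟨w, hw⟩ hwa hwb
    have hwa' : w ≠ a := by simpa using hwa
    have hwb' : w ≠ b := by simpa using hwb
    refine (hdeg w hwa' hwb').induce hw fun y hy => ?_
    by_cases hya : y = a
    · exact Or.inl hya
    by_cases hyb : y = b
    · exact Or.inr (Or.inl hyb)
    have hxw : (isolatePair G a b).Reachable x w := by
      rcases hw with h | h | h
      · exact absurd h hwa'
      · exact absurd h hwb'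
      · exact h
    have hwy : (isolatePair G a b).Adj w y := ⟨hy, ⟨hwa', hwb'⟩, hya, hyb⟩
    exact Or.inr (Or.inr (hxw.trans hwy.reachable))
  by_cases hnbr : ∃ c, c ≠ a ∧ c ≠ b ∧ (G.Adj a c ∨ G.Adj b c) ∧
      ∀ d, G.Adj a d → G.Adj b d → d = c
  · obtain ⟨c, hca, hcb, hc, hcommon⟩ := hnbr
    obtain ⟨y, hcy, hya, hyb⟩ := (hdeg c hca hcb).exists_adj_ne a b
    have hcard : Fintype.card {v : V // v ≠ b} < n :=
      hn ▸ Fintype.card_subtype_lt (x := b) (by simp)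
    refine (ih _ hcard _ (contractInto G a b) ⟨a, hab.ne⟩ ⟨c, hcb⟩ ⟨y, hyb⟩ rfl
      ⟨by simpa using hca.symm, Or.imp_right (fun h => Or.inl ⟨rfl, h⟩) hc⟩ (by simpa using hya)
      (by simpa using hcy.ne') ?_).trans (contractInto_isMinorOf hab)
    rintro ⟨v, hvb⟩ hva hvc
    have hva' : v ≠ a := by simpa using hva
    have hvc' : v ≠ c := by simpa using hvc
    exact (hdeg v hva' hvb).contractInto hab.ne hva' hvb fun h => hvc' (hcommon v h.1 h.2)
  by_cases hcommon : ∃ c, G.Adj a c ∧ G.Adj b c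
  · obtain ⟨c, hac, hbc⟩ := hcommon
    push Not at hnbr
    obtain ⟨d, had, hbd, hdc⟩ := hnbr c hac.ne' hbc.ne' (Or.inl hac)
    exact top_isMinorOf_of_common_neighbors hab hac hbc had hbd hdc.symm
      ((hreach c hac.ne' hbc.ne').symm.trans (hreach d had.ne' hbd.ne'))
  · have hisol : ∀ v, v ≠ a → v ≠ b → ¬G.Adj a v ∧ ¬G.Adj b v := fun v hva hvb => by
      by_contra h
      exact hnbr ⟨v, hva, hvb, by tauto, fun d had hbd => absurd ⟨d, had, hbd⟩ hcommon⟩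
    let s : Set V := {v | v ≠ a ∧ v ≠ b}
    have hcard : Fintype.card s < n :=
      hn ▸ Fintype.card_subtype_lt (p := fun w => w ∈ s) (x := a) (by simp [s])
    have hdeg' : ∀ v : s, HasThreeNeighbors (G.induce s) v := by
      rintro ⟨v, hv⟩
      refine (hdeg v hv.1 hv.2).induce hv fun y hy => ⟨?_, ?_⟩
      · rintro rfl
        exact (hisol v hv.1 hv.2).1 hy.symm
      · rintro rfl
        exact (hisol v hv.1 hv.2).2 hy.symm
    let x' : s := ⟨x, hxa, hxb⟩
    obtain ⟨y, hy, -, -⟩ := (hdeg' x').exists_adj_ne x' x'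
    obtain ⟨z, hz, -, hzy⟩ := (hdeg' x').exists_adj_ne x' y
    exact (ih _ hcard s (G.induce s) x' y z rfl hy hz.ne' hzy fun v _ _ => hdeg' v).trans
      (.of_embedding (Embedding.induce s))

lemma hasThreeNeighbors_of_two_lt_minDegC {V : Type} [Fintype V] {G : SimpleGraph V}
    (h : 2 < minDegC G) (v : V) : HasThreeNeighbors G v := by
  classical
  have hdeg : 2 < G.degree v := h.trans_le (by unfold minDegC; convert G.minDegree_le_degree v)
  rw [← card_neighborFinset_eq_degree, Finset.two_lt_card] at hdeg
  obtain ⟨y₁, h₁, y₂, h₂, y₃, h₃, h₁₂, h₁₃, h₂₃⟩ := hdeg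
  simp only [mem_neighborFinset] at h₁ h₂ h₃
  exact ⟨y₁, y₂, y₃, h₁₂, h₁₃, h₂₃, h₁, h₂, h₃⟩

/-- Every graph of minimum degree at least three has a `K₄` minor. -/
lemma top_isMinorOf_of_two_lt_minDegC {V : Type} [Fintype V] {G : SimpleGraph V}
    (h : 2 < minDegC G) : IsMinorOf (⊤ : SimpleGraph (Fin 4)) G := by
  have hne : Nonempty V := by
    by_contra hV
    rw [not_nonempty_iff] at hV
    simp [minDegC] at h
  obtain ⟨x⟩ := hne
  have hdeg := hasThreeNeighbors_of_two_lt_minDegC h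
  obtain ⟨y, hy, -, -⟩ := (hdeg x).exists_adj_ne x x
  obtain ⟨z, hz, -, hzy⟩ := (hdeg x).exists_adj_ne x y
  exact top_isMinorOf_of_adj _ V G x y z rfl hy hz.ne' hzy fun v _ _ => hdeg v

lemma minDegC_top_fin_four : minDegC (⊤ : SimpleGraph (Fin 4)) = 3 := by
  unfold minDegC
  convert minDegree_top (V := Fin 4)
  simp

lemma not_memD_two_iff {V : Type} {G : SimpleGraph V} :
    ¬ MemD 2 G ↔ IsMinorOf (⊤ : SimpleGraph (Fin 4)) G := by
  refine ⟨fun h => ?_, fun h hmem => ?_⟩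
  · simp only [MemD, not_forall, not_le] at h
    obtain ⟨W, _, H, hHG, hdeg⟩ := h
    exact (top_isMinorOf_of_two_lt_minDegC hdeg).trans hHG
  · have := hmem _ _ h
    rw [minDegC_top_fin_four] at this
    omega

/-- Proposition 2.2: `D̂_2 = {K_4}`. -/
theorem memDHat_two_iff (V : Type) [Fintype V] (G : SimpleGraph V) :
    MemDHat 2 G ↔ Nonempty (G ≃g (⊤ : SimpleGraph (Fin 4))) := by
  constructor
  · rintro ⟨hG, hmin⟩
    by_contra hiso
    exact not_memD_two_iff.2 (.of_embedding (Embedding.refl (G := (⊤ : SimpleGraph (Fin 4)))))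
      (hmin _ _ ⟨not_memD_two_iff.1 hG, fun ⟨e⟩ => hiso ⟨e.symm⟩⟩)
  · rintro ⟨e⟩
    refine ⟨not_memD_two_iff.2 (.of_embedding e.symm.toEmbedding), ?_⟩
    rintro W _ H ⟨hHG, hiso⟩
    by_contra hH
    have hcard : Fintype.card W ≤ Fintype.card (Fin 4) :=
      hHG.card_le.trans_eq (Fintype.card_congr e.toEquiv)
    obtain ⟨f⟩ := nonempty_iso_of_top_isMinorOf (not_memD_two_iff.1 hH) hcard
    exact hiso ⟨(e.trans f).symm⟩
end

section
/- Let k ≥ 0 and let G be a connected (k+1)-regular graph on n vertices. If every edge of G lies in at least 2n − 2k − 5 triangles, then G ∈ D̂_k. -/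
open SimpleGraph

/-- A graph is a minor of itself. -/
theorem IsMinorOf.refl {V : Type} (G : SimpleGraph V) : IsMinorOf G G := by
  refine ⟨fun v => {v}, fun v => Set.singleton_nonempty v, fun u w h => ?_, fun w => ?_, ?_⟩
  · simpa using h
  · exact ⟨Preconnected.of_subsingleton⟩
  · exact fun u w h => ⟨u, rfl, w, rfl, h⟩

/-- Replacing each vertex of a connected induced subgraph `H[C]` by a connected branch set of `G`
yields a connected induced subgraph of `G`. -/
theorem connected_induce_biUnion {U V : Type} {H : SimpleGraph U} {G : SimpleGraph V}
    {B : U → Set V} (hconn : ∀ u, (G.induce (B u)).Connected)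
    (hadj : ∀ ⦃u w : U⦄, H.Adj u w → ∃ a ∈ B u, ∃ b ∈ B w, G.Adj a b)
    {C : Set U} (hC : (H.induce C).Connected) :
    (G.induce (⋃ u ∈ C, B u)).Connected := by
  have hsub : ∀ u ∈ C, B u ⊆ ⋃ u ∈ C, B u := fun u hu => Set.subset_biUnion_of_mem hu
  have hin : ∀ (u : U) (hu : u ∈ C) (a b : V) (ha : a ∈ B u) (hb : b ∈ B u),
      (G.induce (⋃ u ∈ C, B u)).Reachable ⟨a, hsub u hu ha⟩ ⟨b, hsub u hu hb⟩ :=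
    fun u hu a b ha hb =>
      ((hconn u).preconnected ⟨a, ha⟩ ⟨b, hb⟩).map (induceHomOfLE G (hsub u hu)).toHom
  obtain ⟨u₀⟩ := hC.nonempty
  obtain ⟨a₀⟩ := (hconn u₀).nonempty
  have key : ∀ u : C, ∀ b (hb : b ∈ B u),
      (G.induce (⋃ u ∈ C, B u)).Reachable ⟨a₀, hsub u₀ u₀.2 a₀.2⟩ ⟨b, hsub u u.2 hb⟩ := by
    intro u
    induction (reachable_iff_reflTransGen u₀ u).1 (hC.preconnected u₀ u) with
    | refl => exact fun b hb => hin u₀ u₀.2 _ _ a₀.2 hb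
    | @tail v w _ hvw ih =>
      intro b hb
      obtain ⟨c, hc, d, hd, hcd⟩ := hadj (show H.Adj v w from hvw)
      have hstep : (G.induce (⋃ u ∈ C, B u)).Adj ⟨c, hsub v v.2 hc⟩ ⟨d, hsub w w.2 hd⟩ := hcd
      exact ((ih c hc).trans hstep.reachable).trans (hin w w.2 _ _ hd hb)
  refine (connected_iff_exists_forall_reachable _).2 ⟨⟨a₀, hsub u₀ u₀.2 a₀.2⟩, ?_⟩
  rintro ⟨b, hb⟩
  obtain ⟨u, hu, hbu⟩ := Set.mem_iUnion₂.1 hb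
  exact key ⟨u, hu⟩ b hbu

/-- If `B w = {x}` and `w` has in the minor at least as many neighbours as `x` has in `G`, then
every neighbour of `x` lies in the branch set of a neighbour of `w`, and distinct neighbours of `x`
lie in distinct branch sets. -/
theorem neighbors_of_singleton_branch {W V : Type} [Finite V]
    {M : SimpleGraph W} {G : SimpleGraph V} {B : W → Set V}
    (hdisj : ∀ u w : W, u ≠ w → Disjoint (B u) (B w))
    (hadj : ∀ ⦃u w : W⦄, M.Adj u w → ∃ a ∈ B u, ∃ b ∈ B w, G.Adj a b)
    {w : W} {x : V} (hw : B w = {x})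
    (hdeg : (G.neighborSet x).ncard ≤ (M.neighborSet w).ncard) :
    (∀ y, G.Adj x y → ∃ u, M.Adj w u ∧ y ∈ B u) ∧
      ∀ u y z, y ∈ B u → z ∈ B u → G.Adj x y → G.Adj x z → y = z := by
  have heq : ∀ {u v : W} {y : V}, y ∈ B u → y ∈ B v → u = v := fun {u v y} hu hv => by
    by_contra h
    exact Set.disjoint_left.1 (hdisj u v h) hu hv
  have hex : ∀ u, M.Adj w u → ∃ y ∈ B u, G.Adj x y := by
    intro u hu
    obtain ⟨a, ha, b, hb, hab⟩ := hadj hu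
    rw [hw, Set.mem_singleton_iff] at ha
    exact ⟨b, hb, ha ▸ hab⟩
  choose f hfB hfG using hex
  have hsurj : ∀ y ∈ G.neighborSet x, ∃ u, ∃ hu : u ∈ M.neighborSet w, y = f u hu :=
    Set.surj_on_of_inj_on_of_ncard_le (s := M.neighborSet w) (t := G.neighborSet x) f hfG
      (fun u v hu hv h => heq (hfB u hu) (h ▸ hfB v hv)) hdeg (Set.toFinite _)
  refine ⟨fun y hy => ?_, fun u y z hyu hzu hy hz => ?_⟩
  · obtain ⟨u, hu, rfl⟩ := hsurj y hy
    exact ⟨u, hu, hfB u hu⟩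
  · obtain ⟨v, hv, rfl⟩ := hsurj y hy
    obtain ⟨v', hv', rfl⟩ := hsurj z hz
    obtain rfl := heq (hfB v hv) hyu
    obtain rfl := heq (hfB v' hv') hzu
    rfl

/-- Among `m` nonempty pairwise disjoint sets covering parts of an `n`-element type, at least
`2 * m - n` are singletons. -/
theorem two_mul_card_le_card_add_ncard_singletons {W V : Type} [Fintype W] [Fintype V]
    {B : W → Set V} (hne : ∀ w, (B w).Nonempty)
    (hdisj : ∀ u w : W, u ≠ w → Disjoint (B u) (B w)) :
    2 * Fintype.card W ≤ Fintype.card V + {x : V | ∃ w, B w = {x}}.ncard := by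
  classical
  have hsum : ∑ w, (B w).ncard ≤ Fintype.card V := by
    have h : (⋃ w, B w).ncard = ∑ w, (B w).ncard := by
      rw [Set.ncard_iUnion_of_finite (fun w => Set.toFinite _) (fun u w h => hdisj u w h),
        finsum_eq_sum_of_fintype]
    rw [← h, ← Nat.card_eq_fintype_card, ← Set.ncard_univ]
    exact Set.ncard_le_ncard (Set.subset_univ _)
  have hsing : {w | (B w).ncard = 1}.ncard ≤ {x : V | ∃ w, B w = {x}}.ncard := by
    refine Set.ncard_le_ncard_of_injOn (fun w => (hne w).some) ?_ ?_
    · intro w hw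
      obtain ⟨x, hx⟩ := Set.ncard_eq_one.1 hw
      have h : (hne w).some ∈ ({x} : Set V) := hx ▸ (hne w).some_mem
      exact ⟨w, hx.trans (congrArg _ (Set.mem_singleton_iff.1 h).symm)⟩
    · intro u _ v _ h
      by_contra huv
      exact Set.disjoint_left.1 (hdisj u v huv) (hne u).some_mem
        (by rw [show (hne u).some = (hne v).some from h]; exact (hne v).some_mem)
  have hcount : 2 * Fintype.card W ≤ ∑ w, (B w).ncard + {w | (B w).ncard = 1}.ncard := by
    rw [Set.ncard_eq_toFinset_card', Set.toFinset_ofPred, Finset.card_filter,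
      ← Finset.sum_add_distrib, mul_comm, ← smul_eq_mul, ← Finset.card_univ, ← Finset.sum_const]
    refine Finset.sum_le_sum fun w _ => ?_
    have : 0 < (B w).ncard := (Set.ncard_pos).2 (hne w)
    split_ifs <;> omega
  omega

/-- In a connected `(k+1)`-regular graph with every edge in at least `2n - 2k - 5` triangles,
the branch sets of a minor of minimum degree at least `k+1` are exactly the singletons. -/
theorem exists_singleton_branch {k : ℕ} {W V : Type} [Fintype W] [Nonempty W] [Fintype V]
    {M : SimpleGraph W} {G : SimpleGraph V} (hconn : G.Connected)
    (hreg : ∀ v : V, (G.neighborSet v).ncard = k + 1)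
    (htri : ∀ v w : V, G.Adj v w →
      2 * (Fintype.card V : ℤ) - 2 * k - 5 ≤ ({x : V | G.Adj v x ∧ G.Adj w x}.ncard : ℤ))
    (hdeg : ∀ w : W, k + 1 ≤ (M.neighborSet w).ncard)
    {B : W → Set V} (hne : ∀ w, (B w).Nonempty)
    (hdisj : ∀ u w : W, u ≠ w → Disjoint (B u) (B w))
    (hBconn : ∀ w, (G.induce (B w)).Connected)
    (hadj : ∀ ⦃u w : W⦄, M.Adj u w → ∃ a ∈ B u, ∃ b ∈ B w, G.Adj a b) (x : V) :
    ∃ w, B w = {x} := by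
  have hsat : ∀ {w : W} {x : V}, B w = {x} → _ := fun {w x} hw =>
    neighbors_of_singleton_branch hdisj hadj hw ((hreg x).trans_le (hdeg w))
  have hcardW : k + 2 ≤ Fintype.card W := by
    obtain ⟨w⟩ := ‹Nonempty W›
    have h : (insert w (M.neighborSet w)).ncard = (M.neighborSet w).ncard + 1 :=
      Set.ncard_insert_of_notMem (by simp)
    have h' := Set.ncard_le_ncard (Set.subset_univ (insert w (M.neighborSet w)))
    rw [Set.ncard_univ, Nat.card_eq_fintype_card] at h'
    have := hdeg w
    omega
  have hall : ∀ w, ∃ x, B w = {x} := by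
    intro w
    by_contra hw
    have hnt : (B w).Nontrivial := by
      by_contra h
      obtain h | h := (Set.not_nontrivial_iff.1 h).eq_empty_or_singleton
      · exact (hne w).ne_empty h
      · exact hw h
    have : Nontrivial (B w) := hnt.coe_sort
    obtain ⟨a⟩ := (hBconn w).nonempty
    obtain ⟨b, hab⟩ := (hBconn w).preconnected.exists_adj_of_nontrivial a
    have hab' : G.Adj a b := hab
    have hbig : ∀ y ∈ B w, ∀ v, B v ≠ {y} := by
      intro y hy v hv
      by_cases hvw : v = w
      · exact hw ⟨y, hvw ▸ hv⟩
      · exact Set.disjoint_left.1 (hdisj v w hvw) (by rw [hv]; rfl) hy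
    set S := {x : V | ∃ w, B w = {x}} with hS
    have hsub : insert (a : V) (insert (b : V) {x : V | G.Adj a x ∧ G.Adj b x}) ⊆ Sᶜ := by
      rintro y (rfl | rfl | ⟨hay, hby⟩) ⟨v, hv⟩
      · exact hbig _ a.2 v hv
      · exact hbig _ b.2 v hv
      · exact hab'.ne ((hsat hv).2 w a b a.2 b.2 hay.symm hby.symm)
    have hle := Set.ncard_le_ncard hsub
    rw [Set.ncard_insert_of_notMem (by simp [hab'.ne]),
      Set.ncard_insert_of_notMem (by simp)] at hle
    have hcompl := Set.ncard_add_ncard_compl S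
    rw [Nat.card_eq_fintype_card] at hcompl
    have h2 := two_mul_card_le_card_add_ncard_singletons hne hdisj
    rw [← hS] at h2
    have h3 := htri a b hab'
    omega
  obtain ⟨w₀⟩ := ‹Nonempty W›
  obtain ⟨x₀, hx₀⟩ := hall w₀
  induction (reachable_iff_reflTransGen x₀ x).1 (hconn.preconnected x₀ x) with
  | refl => exact ⟨w₀, hx₀⟩
  | @tail y z _ hyz ih =>
    obtain ⟨w, hw⟩ := ih
    obtain ⟨u, _, hu⟩ := (hsat hw).1 z hyz
    obtain ⟨z', hz'⟩ := hall u
    rw [hz', Set.mem_singleton_iff] at hu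
    exact ⟨u, hu ▸ hz'⟩

theorem degC_eq_ncard {V : Type} [Fintype V] (G : SimpleGraph V) (v : V) :
    degC G v = (G.neighborSet v).ncard := by
  classical
  rw [degC, Set.ncard_eq_toFinset_card', ← card_neighborFinset_eq_degree]
  congr!

/-- Lemma 5.1: if `G` is a connected `(k+1)`-regular graph on `n` vertices such
that every edge lies in at least `2n - 2k - 5` triangles, then `G ∈ D̂_k`. -/
theorem memDHat_of_many_triangles (k : ℕ) {V : Type} [Fintype V]
    (G : SimpleGraph V) (hconn : G.Connected)
    (hreg : ∀ v : V, degC G v = k + 1)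
    (htri : ∀ v w : V, G.Adj v w →
      2 * (Fintype.card V : ℤ) - 2 * k - 5 ≤ ({x : V | G.Adj v x ∧ G.Adj w x}.ncard : ℤ)) :
    MemDHat k G := by
  classical
  have := hconn.nonempty
  refine ⟨fun h => ?_, ?_⟩
  · have hle := h V G (IsMinorOf.refl G)
    have hge : k + 1 ≤ minDegC G := by
      rw [minDegC]
      exact le_minDegree_of_forall_le_degree _ _ fun v => (hreg v).ge
    omega
  rintro W _ H ⟨⟨B, hBne, hBdisj, hBconn, hBadj⟩, hiso⟩ U _ M ⟨C, hCne, hCdisj, hCconn, hCadj⟩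
  by_contra! hmin
  have hdeg : ∀ u : U, k + 1 ≤ (M.neighborSet u).ncard := by
    intro u
    rw [← degC_eq_ncard]
    rw [minDegC] at hmin
    exact hmin.trans_le (minDegree_le_degree _ _)
  have : Nonempty U := by
    by_contra h
    rw [not_nonempty_iff] at h
    rw [minDegC, minDegree_of_subsingleton] at hmin
    omega
  have hreg' : ∀ v, (G.neighborSet v).ncard = k + 1 := fun v => by rw [← degC_eq_ncard, hreg]
  have hBeq : ∀ {u v : W} {y : V}, y ∈ B u → y ∈ B v → u = v := fun {u v y} hu hv => by
    by_contra h
    exact Set.disjoint_left.1 (hBdisj u v h) hu hv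
  set D : U → Set V := fun u => ⋃ h ∈ C u, B h
  have hDmem : ∀ {u h y}, h ∈ C u → y ∈ B h → y ∈ D u := fun hh hy => Set.mem_biUnion hh hy
  have hDne : ∀ u, (D u).Nonempty := fun u =>
    ⟨_, hDmem (hCne u).some_mem (hBne _).some_mem⟩
  have hDdisj : ∀ u v, u ≠ v → Disjoint (D u) (D v) := by
    intro u v huv
    refine Set.disjoint_left.2 fun y hy hy' => ?_
    obtain ⟨g, hg, hyg⟩ := Set.mem_iUnion₂.1 hy
    obtain ⟨h, hh, hyh⟩ := Set.mem_iUnion₂.1 hy'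
    exact Set.disjoint_left.1 (hCdisj u v huv) hg (hBeq hyg hyh ▸ hh)
  have hDconn : ∀ u, (G.induce (D u)).Connected := fun u =>
    connected_induce_biUnion hBconn hBadj (hCconn u)
  have hDadj : ∀ ⦃u v⦄, M.Adj u v → ∃ a ∈ D u, ∃ b ∈ D v, G.Adj a b := by
    intro u v huv
    obtain ⟨g, hg, h, hh, hgh⟩ := hCadj huv
    obtain ⟨a, ha, b, hb, hab⟩ := hBadj hgh
    exact ⟨a, hDmem hg ha, b, hDmem hh hb, hab⟩
  choose φ hφ using exists_singleton_branch hconn hreg' htri hdeg hDne hDdisj hDconn hDadj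
  have hBφ : ∀ x, ∀ h ∈ C (φ x), B h = {x} := fun x h hh =>
    (hBne h).subset_singleton_iff.1 fun y hy => hφ x ▸ hDmem hh hy
  choose ψ hψ using fun x => (⟨_, hBφ x _ (hCne (φ x)).some_mem⟩ : ∃ h, B h = {x})
  have hψmem : ∀ x, x ∈ B (ψ x) := fun x => by rw [hψ]; rfl
  have hinj : Function.Injective ψ := fun x y hxy =>
    Set.singleton_injective (by rw [← hψ, ← hψ, hxy])
  have hsurj : Function.Surjective ψ := fun h =>
    ⟨(hBne h).some, hBeq (hψmem _) (hBne h).some_mem⟩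
  refine hiso ⟨RelIso.symm ⟨Equiv.ofBijective ψ ⟨hinj, hsurj⟩, ?_⟩⟩
  intro x y
  change H.Adj (ψ x) (ψ y) ↔ G.Adj x y
  constructor
  · intro hxy
    obtain ⟨a, ha, b, hb, hab⟩ := hBadj hxy
    rw [hψ, Set.mem_singleton_iff] at ha hb
    exact ha ▸ hb ▸ hab
  · intro hxy
    obtain ⟨u, hu, hyu⟩ := (neighbors_of_singleton_branch hDdisj hDadj (hφ x)
      ((hreg' x).trans_le (hdeg _))).1 y hxy
    obtain ⟨g, hg, h, hh, hgh⟩ := hCadj hu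
    have huφ : u = φ y := by
      by_contra hne
      exact Set.disjoint_left.1 (hDdisj u (φ y) hne) hyu (by rw [hφ]; rfl)
    subst huφ
    have hgx : g = ψ x := hBeq (y := x) (by rw [hBφ x g hg]; rfl) (hψmem x)
    have hhy : h = ψ y := hBeq (y := y) (by rw [hBφ y h hh]; rfl) (hψmem y)
    exact hgx ▸ hhy ▸ hgh
end
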